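/- Let n_T ≥ 1 and let (g^k)_{k=1}^{n_T} and (λ_l)_{l=0}^{n_T−1} be nonnegative real sequences. Suppose λ ≥ 0 satisfies λ ≥ ∑_{l=0}^{n_T−1} λ_l and the step size satisfies τ ≤ (2λ(1+β))^{−1/β}. If a nonnegative sequence (v^k)_{k=0}^{n_T} satisfies, for all 1 ≤ k ≤ n_T, D^{(β)}_τ v^k ≤ ∑_{l=1}^{k} λ_{k−l}·v^l + g^k, then for all 1 ≤ k ≤ n_T, v^k ≤ 2·E_β(2λ·t_k^β)·( v^0 + max_{1≤m≤k} ∑_{j=1}^{m} P_{m−j}·g^j ). -/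

import Mathlib

open Finset

/-- Generalized binomial coefficient `C(α, j) = α(α−1)⋯(α−j+1)/j!`. -/
noncomputable def genBinom (α : ℝ) (j : ℕ) : ℝ :=
  (∏ i ∈ Finset.range j, (α - i)) / (Nat.factorial j)

/-- The coefficients `ϖ_j = (−1)^j C(β, j)` of `(1−z)^β`. -/
noncomputable def varpi (β : ℝ) (j : ℕ) : ℝ := (-1 : ℝ) ^ j * genBinom β j

/-- The coefficients `ϱ_j = (−1)^j C(−β, j)` of `(1−z)^{−β}`. -/
noncomputable def varrho (β : ℝ) (j : ℕ) : ℝ := (-1 : ℝ) ^ j * genBinom (-β) j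

/-- The Mittag-Leffler function `E_β(z) = ∑_{l=0}^∞ z^l / Γ(1 + lβ)`. -/
noncomputable def mittagLeffler (β z : ℝ) : ℝ :=
  ∑' l : ℕ, z ^ l / Real.Gamma (1 + (l : ℝ) * β)

/-!
Convolution with `ϱ` inverts the discrete fractional derivative, so the hypothesis becomes
`v^k ≤ G + ∑_{j ≤ k} P_{k-j} ∑_{l ≤ j} λ_{j-l} v^l`, where `G` bounds `v^0 + ∑ P_{m-j} g^j`.
By log-convexity of `Γ`, `ϱ_m ≤ m^{β-1} / Γ(β)`; comparing a sum with a beta integral then gives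
`∑_{j < k} ϱ_{k-j} j^c / Γ(1+c) ≤ k^{c+β} / Γ(1+c+β)`. Hence summation against `ϱ` sends each term
of the series of `E_β(q j^β)` below the next one, and
`1 + q ∑_{j < k} ϱ_{k-j} E_β(q j^β) ≤ E_β(q k^β)`.
The diagonal term `P_0 = τ^β` costs a factor `C ≥ (1 - λ τ^β)⁻¹`: with `q = C λ τ^β` the sequence
`C E_β(q k^β) G` is a nondecreasing supersolution, so it dominates `v`. The step-size restriction
permits `C = 2`.
-/

section GammaInequalities

theorem Gamma_add_le_rpow_mul_Gamma {x s : ℝ} (hx : 0 < x) (hs₀ : 0 ≤ s) (hs₁ : s ≤ 1) :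
    Real.Gamma (x + s) ≤ x ^ s * Real.Gamma x := by
  have hΓx := Real.Gamma_pos_of_pos hx
  have hΓxs := Real.Gamma_pos_of_pos (add_pos_of_pos_of_nonneg hx hs₀)
  have hxs := Real.rpow_pos_of_pos hx s
  have hconv := Real.convexOn_log_Gamma.2 (Set.mem_Ioi.2 hx) (Set.mem_Ioi.2 (add_pos hx one_pos))
    (sub_nonneg.2 hs₁) hs₀ (sub_add_cancel 1 s)
  simp only [smul_eq_mul, Function.comp_apply, Real.Gamma_add_one hx.ne',
    Real.log_mul hx.ne' hΓx.ne'] at hconv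
  rw [show (1 - s) * x + s * (x + 1) = x + s by ring] at hconv
  rw [← Real.log_le_log_iff hΓxs (by positivity), Real.log_mul hxs.ne' hΓx.ne', Real.log_rpow hx]
  linarith

theorem rpow_mul_Gamma_add_one_le_Gamma {x s : ℝ} (hx : 0 < x) (hs : 0 < s) :
    x ^ s * Real.Gamma (x + 1) ≤ Real.Gamma (x + 1 + s) := by
  have hΓx := Real.Gamma_pos_of_pos hx
  have hΓx₁ := Real.Gamma_pos_of_pos (add_pos hx one_pos)
  have hΓxs : 0 < Real.Gamma (x + 1 + s) := Real.Gamma_pos_of_pos (by positivity)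
  have hxs := Real.rpow_pos_of_pos hx s
  have hslope := Real.convexOn_log_Gamma.slope_mono_adjacent (Set.mem_Ioi.2 hx)
    (Set.mem_Ioi.2 (by positivity : 0 < x + 1 + s)) (lt_add_one x) (lt_add_of_pos_right _ hs)
  have hlog : Real.log (Real.Gamma (x + 1)) - Real.log (Real.Gamma x) = Real.log x := by
    rw [Real.Gamma_add_one hx.ne', Real.log_mul hx.ne' hΓx.ne', add_sub_cancel_right]
  simp only [Function.comp_apply, hlog, add_sub_cancel_left, div_one, le_div_iff₀ hs] at hslope
  rw [← Real.log_le_log_iff (by positivity) hΓxs, Real.log_mul hxs.ne' hΓx₁.ne', Real.log_rpow hx]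
  linarith

end GammaInequalities

section MittagLeffler

variable {β : ℝ}

theorem Gamma_one_add_natCast_mul_pos (hβ : 0 < β) (l : ℕ) : 0 < Real.Gamma (1 + l * β) :=
  Real.Gamma_pos_of_pos (by positivity)

theorem summable_mittagLeffler (hβ : 0 < β) (z : ℝ) :
    Summable fun l : ℕ ↦ z ^ l / Real.Gamma (1 + l * β) := by
  have htendsto : Filter.Tendsto (fun l : ℕ ↦ ((l : ℝ) * β) ^ β) Filter.atTop Filter.atTop :=
    (tendsto_rpow_atTop hβ).comp (tendsto_natCast_atTop_atTop.atTop_mul_const hβ)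
  refine summable_of_ratio_norm_eventually_le (r := 1 / 2) (by norm_num) ?_
  filter_upwards [htendsto.eventually_ge_atTop (2 * |z|), Filter.eventually_gt_atTop 0]
    with l hz hl
  have hΓ := Gamma_one_add_natCast_mul_pos hβ l
  have hgrowth : 2 * |z| * Real.Gamma (1 + l * β) ≤ Real.Gamma (1 + (l + 1 : ℕ) * β) :=
    calc
      2 * |z| * Real.Gamma (1 + l * β) ≤ (l * β) ^ β * Real.Gamma (l * β + 1) := by
        rw [add_comm 1]; gcongr
      _ ≤ Real.Gamma (l * β + 1 + β) := rpow_mul_Gamma_add_one_le_Gamma (by positivity) hβ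
      _ = Real.Gamma (1 + (l + 1 : ℕ) * β) := by push_cast; ring_nf
  rw [norm_div, norm_div, norm_pow, norm_pow, Real.norm_eq_abs, Real.norm_of_nonneg hΓ.le,
    Real.norm_of_nonneg (Gamma_one_add_natCast_mul_pos hβ (l + 1)).le, ← mul_div_assoc,
    div_le_div_iff₀ (Gamma_one_add_natCast_mul_pos hβ (l + 1)) hΓ]
  calc
    |z| ^ (l + 1) * Real.Gamma (1 + l * β)
        = 1 / 2 * |z| ^ l * (2 * |z| * Real.Gamma (1 + l * β)) := by ring
    _ ≤ 1 / 2 * |z| ^ l * Real.Gamma (1 + (l + 1 : ℕ) * β) := by gcongr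

theorem hasSum_mittagLeffler (hβ : 0 < β) (z : ℝ) :
    HasSum (fun l : ℕ ↦ z ^ l / Real.Gamma (1 + l * β)) (mittagLeffler β z) :=
  (summable_mittagLeffler hβ z).hasSum

theorem hasSum_succ_mittagLeffler (hβ : 0 < β) (z : ℝ) :
    HasSum (fun l : ℕ ↦ z ^ (l + 1) / Real.Gamma (1 + (l + 1 : ℕ) * β))
      (mittagLeffler β z - 1) := by
  simpa using (hasSum_nat_add_iff' 1).2 (hasSum_mittagLeffler hβ z)

theorem mittagLeffler_nonneg (hβ : 0 < β) {z : ℝ} (hz : 0 ≤ z) : 0 ≤ mittagLeffler β z :=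
  tsum_nonneg fun l ↦ div_nonneg (pow_nonneg hz l) (Gamma_one_add_natCast_mul_pos hβ l).le

theorem mittagLeffler_monotoneOn (hβ : 0 < β) : MonotoneOn (mittagLeffler β) (Set.Ici 0) := by
  intro x hx y _ hxy
  refine hasSum_le (fun l ↦ ?_) (hasSum_mittagLeffler hβ x) (hasSum_mittagLeffler hβ y)
  have := Gamma_one_add_natCast_mul_pos hβ l
  have hx₀ : 0 ≤ x := hx
  gcongr

theorem monotone_mittagLeffler_mul_natCast_rpow (hβ : 0 < β) {q : ℝ} (hq : 0 ≤ q) :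
    Monotone fun k : ℕ ↦ mittagLeffler β (q * (k : ℝ) ^ β) := by
  intro i j hij
  refine mittagLeffler_monotoneOn hβ (Set.mem_Ici.2 (by positivity))
    (Set.mem_Ici.2 (by positivity)) ?_
  gcongr

end MittagLeffler

section BinomialCoefficients

theorem genBinom_eq_choose (α : ℝ) (j : ℕ) : genBinom α j = Ring.choose α j := by
  rw [Ring.choose_eq_smul, genBinom, ← Polynomial.aeval_eq_smeval, Polynomial.aeval_def,
    Polynomial.eval₂_eq_eval_map, descPochhammer_map, descPochhammer_eval_eq_prod_range,
    smul_eq_mul, div_eq_inv_mul]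

theorem mk_varpi_eq_rescale_binomialSeries (α : ℝ) :
    PowerSeries.mk (varpi α) = PowerSeries.rescale (-1) (PowerSeries.binomialSeries ℝ α) := by
  ext n
  simp [varpi, genBinom_eq_choose]

theorem varrho_eq_varpi_neg (β : ℝ) : varrho β = varpi (-β) := rfl

theorem mk_varpi_mul_mk_varrho (β : ℝ) :
    PowerSeries.mk (varpi β) * PowerSeries.mk (varrho β) = 1 := by
  rw [varrho_eq_varpi_neg, mk_varpi_eq_rescale_binomialSeries, mk_varpi_eq_rescale_binomialSeries,
    ← map_mul, ← PowerSeries.binomialSeries_add, add_neg_cancel, PowerSeries.binomialSeries_zero,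
    map_one]

theorem coeff_mk_mul_mk {R : Type*} [CommSemiring R] (u c : ℕ → R) (k : ℕ) :
    PowerSeries.coeff k (PowerSeries.mk u * PowerSeries.mk c) =
      ∑ j ∈ range (k + 1), c (k - j) * u j := by
  simp only [PowerSeries.coeff_mul, PowerSeries.coeff_mk,
    Finset.Nat.sum_antidiagonal_eq_sum_range_succ_mk, mul_comm]

theorem sum_varrho_mul_sum_varpi_mul (β : ℝ) (u : ℕ → ℝ) (k : ℕ) :
    ∑ j ∈ range (k + 1), varrho β (k - j) * ∑ i ∈ range (j + 1), varpi β (j - i) * u i = u k := by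
  have hmk : PowerSeries.mk (fun j ↦ ∑ i ∈ range (j + 1), varpi β (j - i) * u i) =
      PowerSeries.mk u * PowerSeries.mk (varpi β) := by
    ext j
    rw [coeff_mk_mul_mk, PowerSeries.coeff_mk]
  rw [← coeff_mk_mul_mk, hmk, mul_assoc, mk_varpi_mul_mk_varrho, mul_one, PowerSeries.coeff_mk]

theorem varrho_zero (β : ℝ) : varrho β 0 = 1 := by simp [varrho, genBinom]

theorem varrho_succ (β : ℝ) (m : ℕ) : varrho β (m + 1) = varrho β m * ((m + β) / (m + 1)) := by
  simp only [varrho, genBinom, prod_range_succ, pow_succ, Nat.factorial_succ]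
  push_cast
  field_simp
  ring

variable {β : ℝ}

theorem varrho_nonneg (hβ : 0 ≤ β) (m : ℕ) : 0 ≤ varrho β m := by
  induction m with
  | zero => rw [varrho_zero]; exact zero_le_one
  | succ m ih => rw [varrho_succ]; positivity

theorem varrho_mul_Gamma_mul_factorial (hβ : 0 < β) (m : ℕ) :
    varrho β m * (Real.Gamma β * m.factorial) = Real.Gamma (m + β) := by
  induction m with
  | zero => simp [varrho_zero]
  | succ m ih =>
    have hmβ : (m : ℝ) + β ≠ 0 := by positivity
    rw [Nat.cast_succ, add_right_comm, Real.Gamma_add_one hmβ, ← ih, varrho_succ,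
      Nat.factorial_succ]
    push_cast
    field_simp

theorem varrho_le_rpow_div_Gamma (hβ₀ : 0 < β) (hβ₁ : β ≤ 1) {m : ℕ} (hm : m ≠ 0) :
    varrho β m ≤ (m : ℝ) ^ (β - 1) / Real.Gamma β := by
  have hm₀ : (0 : ℝ) < m := by positivity
  have hΓβ := Real.Gamma_pos_of_pos hβ₀
  have := Real.Gamma_pos_of_pos hm₀
  rw [le_div_iff₀ hΓβ, ← mul_le_mul_iff_left₀ (show (0 : ℝ) < m.factorial by positivity)]
  calc
    varrho β m * Real.Gamma β * m.factorial = Real.Gamma (m + β) := by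
      rw [mul_assoc, varrho_mul_Gamma_mul_factorial hβ₀]
    _ ≤ (m : ℝ) ^ β * Real.Gamma m := Gamma_add_le_rpow_mul_Gamma hm₀ hβ₀.le hβ₁
    _ = (m : ℝ) ^ (β - 1) * m.factorial := by
      rw [← Real.Gamma_nat_eq_factorial, Real.Gamma_add_one hm₀.ne', Real.rpow_sub_one hm₀.ne']
      field_simp

end BinomialCoefficients

section DiscreteFractionalIntegral

theorem integral_rpow_mul_sub_rpow {s t a : ℝ} (hs : 0 < s) (ht : 0 < t) (ha : 0 < a) :
    ∫ x in (0 : ℝ)..a, x ^ (s - 1) * (a - x) ^ (t - 1) =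
      a ^ (s + t - 1) * (Real.Gamma s * Real.Gamma t / Real.Gamma (s + t)) := by
  have hcomplex := Complex.betaIntegral_scaled s t ha
  rw [Complex.betaIntegral_eq_Gamma_mul_div s t (by simpa) (by simpa), ← Complex.ofReal_add,
    Complex.Gamma_ofReal, Complex.Gamma_ofReal, Complex.Gamma_ofReal] at hcomplex
  have hintegral : ∫ x in (0 : ℝ)..a, (x : ℂ) ^ ((s : ℂ) - 1) * ((a : ℂ) - x) ^ ((t : ℂ) - 1) =
      ((∫ x in (0 : ℝ)..a, x ^ (s - 1) * (a - x) ^ (t - 1) : ℝ) : ℂ) := by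
    rw [← intervalIntegral.integral_ofReal]
    refine intervalIntegral.integral_congr fun x hx ↦ ?_
    rw [Set.uIcc_of_le ha.le] at hx
    simp only [Complex.ofReal_mul, Complex.ofReal_cpow hx.1,
      Complex.ofReal_cpow (sub_nonneg.2 hx.2), Complex.ofReal_sub, Complex.ofReal_one]
  have hpow : (a : ℂ) ^ (((s + t : ℝ) : ℂ) - 1) = ((a ^ (s + t - 1) : ℝ) : ℂ) := by
    rw [Complex.ofReal_cpow ha.le, Complex.ofReal_sub, Complex.ofReal_one]
  rw [hintegral, hpow] at hcomplex
  exact_mod_cast hcomplex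

theorem intervalIntegrable_rpow_mul_sub_rpow {c r : ℝ} (hc : 0 ≤ c) (hr : -1 < r) (k a b : ℝ) :
    IntervalIntegrable (fun x : ℝ ↦ x ^ c * (k - x) ^ r) MeasureTheory.volume a b := by
  have hsing : IntervalIntegrable (fun x : ℝ ↦ (k - x) ^ r) MeasureTheory.volume a b := by
    simpa using (intervalIntegral.intervalIntegrable_rpow' (a := k - a) (b := k - b)
      hr).comp_sub_left k
  exact hsing.continuousOn_mul (Real.continuous_rpow_const hc).continuousOn

variable {β c : ℝ}

theorem sum_rpow_mul_sub_rpow_le_integral (hβ₀ : 0 < β) (hβ₁ : β ≤ 1) (hc : 0 ≤ c) (k : ℕ) :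
    ∑ j ∈ range k, (j : ℝ) ^ c * ((k : ℝ) - j) ^ (β - 1) ≤
      ∫ x in (0 : ℝ)..k, x ^ c * ((k : ℝ) - x) ^ (β - 1) := by
  have hint := intervalIntegrable_rpow_mul_sub_rpow hc (by linarith : -1 < β - 1) k
    ((0 : ℕ) : ℝ) k
  rw [intervalIntegrable_iff_integrableOn_Ico_of_le (by simp)] at hint
  rw [range_eq_Ico, ← Nat.cast_zero (R := ℝ)]
  refine sum_Ico_le_integral_of_le (f := fun j : ℝ ↦ j ^ c * ((k : ℝ) - j) ^ (β - 1))
    k.zero_le (fun j hj x hx ↦ ?_) hint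
  have hjk : ((j + 1 : ℕ) : ℝ) ≤ k := by exact_mod_cast hj.2
  have hxk : 0 < (k : ℝ) - x := sub_pos.2 (hx.2.trans_le hjk)
  have hjx : (j : ℝ) ≤ x := hx.1
  refine mul_le_mul (by gcongr) ?_ (Real.rpow_nonneg (by linarith) _)
    (Real.rpow_nonneg (j.cast_nonneg.trans hjx) _)
  exact Real.rpow_le_rpow_of_nonpos hxk (by linarith) (by linarith)

theorem sum_varrho_mul_rpow_div_Gamma_le (hβ₀ : 0 < β) (hβ₁ : β ≤ 1) (hc : 0 ≤ c) (k : ℕ) :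
    ∑ j ∈ range k, varrho β (k - j) * ((j : ℝ) ^ c / Real.Gamma (1 + c)) ≤
      (k : ℝ) ^ (c + β) / Real.Gamma (1 + c + β) := by
  have hΓβ := Real.Gamma_pos_of_pos hβ₀
  have hΓc : 0 < Real.Gamma (1 + c) := Real.Gamma_pos_of_pos (by positivity)
  have hΓcβ : 0 < Real.Gamma (1 + c + β) := Real.Gamma_pos_of_pos (by positivity)
  rcases Nat.eq_zero_or_pos k with rfl | hk
  · rw [range_zero, sum_empty]; positivity
  calc
    ∑ j ∈ range k, varrho β (k - j) * ((j : ℝ) ^ c / Real.Gamma (1 + c))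
        ≤ ∑ j ∈ range k, ((k : ℝ) - j) ^ (β - 1) / Real.Gamma β *
            ((j : ℝ) ^ c / Real.Gamma (1 + c)) := by
      gcongr with j hj
      rw [← Nat.cast_sub (mem_range.1 hj).le]
      exact varrho_le_rpow_div_Gamma hβ₀ hβ₁ (Nat.sub_pos_of_lt (mem_range.1 hj)).ne'
    _ = (∑ j ∈ range k, (j : ℝ) ^ c * ((k : ℝ) - j) ^ (β - 1)) /
          (Real.Gamma (1 + c) * Real.Gamma β) := by
      rw [sum_div]
      refine sum_congr rfl fun j _ ↦ ?_
      field_simp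
    _ ≤ (∫ x in (0 : ℝ)..k, x ^ (1 + c - 1) * ((k : ℝ) - x) ^ (β - 1)) /
          (Real.Gamma (1 + c) * Real.Gamma β) := by
      rw [add_sub_cancel_left]
      gcongr
      exact sum_rpow_mul_sub_rpow_le_integral hβ₀ hβ₁ hc k
    _ = (k : ℝ) ^ (c + β) / Real.Gamma (1 + c + β) := by
      rw [integral_rpow_mul_sub_rpow (by positivity) hβ₀ (by positivity),
        show 1 + c + β - 1 = c + β by ring]
      field_simp

theorem mul_rpow_pow_div {x : ℝ} (hx : 0 ≤ x) (q r y : ℝ) (l : ℕ) :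
    (q * x ^ r) ^ l / y = q ^ l * (x ^ (l * r) / y) := by
  rw [mul_pow, ← Real.rpow_mul_natCast hx, mul_comm r, mul_div_assoc]

theorem mul_sum_varrho_mul_mittagLeffler_le (hβ₀ : 0 < β) (hβ₁ : β ≤ 1) {q : ℝ} (hq : 0 ≤ q)
    (k : ℕ) :
    q * ∑ j ∈ range k, varrho β (k - j) * mittagLeffler β (q * (j : ℝ) ^ β) ≤
      mittagLeffler β (q * (k : ℝ) ^ β) - 1 := by
  have hseries := (hasSum_sum fun j (_ : j ∈ range k) ↦
    (hasSum_mittagLeffler hβ₀ (q * (j : ℝ) ^ β)).mul_left (varrho β (k - j))).mul_left q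
  refine hasSum_le (fun l ↦ ?_) hseries (hasSum_succ_mittagLeffler hβ₀ (q * (k : ℝ) ^ β))
  calc
    q * ∑ j ∈ range k, varrho β (k - j) * ((q * (j : ℝ) ^ β) ^ l / Real.Gamma (1 + l * β))
        = q ^ (l + 1) * ∑ j ∈ range k,
            varrho β (k - j) * ((j : ℝ) ^ (l * β) / Real.Gamma (1 + l * β)) := by
      simp only [mul_rpow_pow_div (Nat.cast_nonneg _), mul_sum]
      refine sum_congr rfl fun j _ ↦ ?_
      ring
    _ ≤ q ^ (l + 1) * ((k : ℝ) ^ (l * β + β) / Real.Gamma (1 + l * β + β)) := by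
      gcongr
      exact sum_varrho_mul_rpow_div_Gamma_le hβ₀ hβ₁ (by positivity) k
    _ = (q * (k : ℝ) ^ β) ^ (l + 1) / Real.Gamma (1 + (l + 1 : ℕ) * β) := by
      rw [mul_rpow_pow_div k.cast_nonneg, Nat.cast_succ, add_one_mul, add_assoc]

end DiscreteFractionalIntegral

section DiscreteFractionalDerivative

/-- The discrete fractional derivative `D^{(β)}_τ w^k` of a sequence `w` with time step `τ`. -/
noncomputable def discreteFracDeriv (β τ : ℝ) (w : ℕ → ℝ) (k : ℕ) : ℝ :=
  τ ^ (-β) * ∑ j ∈ range (k + 1), varpi β (k - j) * (w j - w 0)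

theorem discreteFracDeriv_zero_right (β τ : ℝ) (w : ℕ → ℝ) : discreteFracDeriv β τ w 0 = 0 := by
  simp [discreteFracDeriv]

theorem sum_varrho_mul_discreteFracDeriv (β : ℝ) {τ : ℝ} (hτ : 0 < τ) (w : ℕ → ℝ) (k : ℕ) :
    ∑ j ∈ Icc 1 k, τ ^ β * varrho β (k - j) * discreteFracDeriv β τ w j = w k - w 0 := by
  have hcancel : τ ^ β * τ ^ (-β) = 1 := by rw [← Real.rpow_add hτ, add_neg_cancel, Real.rpow_zero]
  calc
    ∑ j ∈ Icc 1 k, τ ^ β * varrho β (k - j) * discreteFracDeriv β τ w j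
        = ∑ j ∈ range (k + 1), τ ^ β * varrho β (k - j) * discreteFracDeriv β τ w j := by
      rw [range_eq_Ico, sum_eq_sum_Ico_succ_bot k.succ_pos, discreteFracDeriv_zero_right, mul_zero,
        zero_add]
      rfl
    _ = ∑ j ∈ range (k + 1), varrho β (k - j) *
          ∑ i ∈ range (j + 1), varpi β (j - i) * (w i - w 0) := by
      refine sum_congr rfl fun j _ ↦ ?_
      rw [discreteFracDeriv, mul_right_comm, ← mul_assoc, hcancel, one_mul, mul_comm]
    _ = w k - w 0 := sum_varrho_mul_sum_varpi_mul β (fun i ↦ w i - w 0) k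

theorem le_add_sum_varrho_mul_of_discreteFracDeriv_le {β τ : ℝ} (hβ : 0 ≤ β) (hτ : 0 < τ)
    {w f : ℕ → ℝ} {k : ℕ} (hf : ∀ j ∈ Icc 1 k, discreteFracDeriv β τ w j ≤ f j) :
    w k ≤ w 0 + ∑ j ∈ Icc 1 k, τ ^ β * varrho β (k - j) * f j := by
  rw [← sub_le_iff_le_add', ← sum_varrho_mul_discreteFracDeriv β hτ]
  gcongr with j hj
  · exact mul_nonneg (by positivity) (varrho_nonneg hβ _)
  · exact hf j hj

end DiscreteFractionalDerivative

section ComparisonPrinciple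

variable {m n : ℕ} {a v w K G : ℕ → ℝ} {Λ : ℝ}

theorem sum_Icc_mul_le_of_sum_range_le (ha : ∀ l < n, 0 ≤ a l) (hsum : ∑ l ∈ range n, a l ≤ Λ)
    {j : ℕ} (hj : j ≤ n) {M : ℝ} (hM : 0 ≤ M) (hv : ∀ l ∈ Icc 1 j, v l ≤ M) :
    ∑ l ∈ Icc 1 j, a (j - l) * v l ≤ Λ * M := by
  have hreflect : ∑ l ∈ Icc 1 j, a (j - l) = ∑ i ∈ range j, a i := by
    rw [← Ico_add_one_right_eq_Icc, sum_Ico_reflect a 1 le_rfl, Nat.sub_self, Nat.add_sub_cancel,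
      range_eq_Ico]
  calc
    ∑ l ∈ Icc 1 j, a (j - l) * v l ≤ ∑ l ∈ Icc 1 j, a (j - l) * M := by
      gcongr with l hl
      · have := mem_Icc.1 hl
        exact ha _ (by omega)
      · exact hv l hl
    _ = (∑ i ∈ range j, a i) * M := by rw [← sum_mul, hreflect]
    _ ≤ Λ * M := by
      gcongr
      refine le_trans ?_ hsum
      exact sum_le_sum_of_subset_of_nonneg (range_subset_range.2 hj)
        fun i hi _ ↦ ha i (mem_range.1 hi)

-- At the first `k` with `w k < v k`, monotonicity of `w` makes `v k` the largest of
-- `v 1, …, v k`; the supersolution property then contradicts `Λ * K 0 < 1`.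
theorem le_supersolution_of_le_sum (hmn : m ≤ n) (hK : ∀ i, 0 ≤ K i) (hK₀ : Λ * K 0 < 1)
    (ha : ∀ l < n, 0 ≤ a l) (hsum : ∑ l ∈ range n, a l ≤ Λ)
    (hw₀ : 0 ≤ w 0) (hw : Monotone w)
    (hvK : ∀ k ∈ Icc 1 m,
      v k ≤ G k + ∑ j ∈ Icc 1 k, K (k - j) * ∑ l ∈ Icc 1 j, a (j - l) * v l)
    (hwK : ∀ k ∈ Icc 1 m, G k + Λ * ∑ j ∈ Icc 1 k, K (k - j) * w j ≤ w k) :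
    ∀ k ∈ Icc 1 m, v k ≤ w k := by
  intro k hk
  induction k using Nat.strong_induction_on with
  | _ k ih =>
  have ⟨hk₁, hkm⟩ := mem_Icc.1 hk
  by_contra! hlt
  have hw_nonneg (j : ℕ) : 0 ≤ w j := hw₀.trans (hw j.zero_le)
  have hvw {l : ℕ} (hl : l ∈ Ico 1 k) : v l ≤ w l := by
    have := mem_Ico.1 hl
    exact ih l this.2 (mem_Icc.2 ⟨this.1, by omega⟩)
  have hpast : ∑ j ∈ Ico 1 k, K (k - j) * ∑ l ∈ Icc 1 j, a (j - l) * v l ≤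
      Λ * ∑ j ∈ Ico 1 k, K (k - j) * w j := by
    simp only [mul_sum, mul_left_comm Λ]
    simp only [← mul_sum]
    gcongr with j hj
    · exact hK _
    have := mem_Ico.1 hj
    refine sum_Icc_mul_le_of_sum_range_le ha hsum (by omega) (hw_nonneg j) fun l hl ↦ ?_
    have := mem_Icc.1 hl
    exact (hvw (mem_Ico.2 ⟨this.1, by omega⟩)).trans (hw this.2)
  have hpresent : ∑ l ∈ Icc 1 k, a (k - l) * v l ≤ Λ * v k := by
    refine sum_Icc_mul_le_of_sum_range_le ha hsum (hkm.trans hmn) ((hw_nonneg k).trans hlt.le)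
      fun l hl ↦ ?_
    have ⟨hl₁, hlk⟩ := mem_Icc.1 hl
    rcases hlk.eq_or_lt with rfl | hlk
    · exact le_rfl
    · exact ((hvw (mem_Ico.2 ⟨hl₁, hlk⟩)).trans (hw hlk.le)).trans hlt.le
  have hv := hvK k hk
  have hsuper := hwK k hk
  rw [← sum_Ico_add_eq_sum_Icc hk₁, Nat.sub_self] at hv hsuper
  have hK₀v := mul_le_mul_of_nonneg_left hpresent (hK 0)
  have hcontra : 0 < (1 - Λ * K 0) * (v k - w k) := mul_pos (sub_pos.2 hK₀) (sub_pos.2 hlt)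
  linarith

end ComparisonPrinciple

section Gronwall

variable {β τ : ℝ}

theorem mittagLeffler_supersolution (hβ₀ : 0 < β) (hβ₁ : β ≤ 1) (hτ : 0 ≤ τ) {Λ C G : ℝ}
    (hΛ : 0 ≤ Λ) (hC : 0 ≤ C) (hstep : 1 ≤ C * (1 - Λ * τ ^ β)) (hG : 0 ≤ G) {k : ℕ}
    (hk : 1 ≤ k) :
    G + Λ * ∑ j ∈ Icc 1 k, τ ^ β * varrho β (k - j) *
        (C * mittagLeffler β (C * Λ * τ ^ β * (j : ℝ) ^ β) * G) ≤
      C * mittagLeffler β (C * Λ * τ ^ β * (k : ℝ) ^ β) * G := by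
  set q := C * Λ * τ ^ β with hq
  have hq₀ : 0 ≤ q := by positivity
  have hqC : 1 + q ≤ C := by rw [hq]; linarith
  set E : ℕ → ℝ := fun j ↦ mittagLeffler β (q * (j : ℝ) ^ β)
  have hE_nonneg (j : ℕ) : 0 ≤ E j := mittagLeffler_nonneg hβ₀ (by positivity)
  have hpast : q * ∑ j ∈ Ico 1 k, varrho β (k - j) * E j ≤ E k - 1 := by
    refine le_trans ?_ (mul_sum_varrho_mul_mittagLeffler_le hβ₀ hβ₁ hq₀ k)
    rw [range_eq_Ico]
    gcongr
    · exact fun j _ _ ↦ mul_nonneg (varrho_nonneg hβ₀.le _) (hE_nonneg j)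
    · exact zero_le_one
  calc
    G + Λ * ∑ j ∈ Icc 1 k, τ ^ β * varrho β (k - j) * (C * E j * G)
        = (1 + q * ∑ j ∈ Icc 1 k, varrho β (k - j) * E j) * G := by
      rw [one_add_mul, mul_sum, mul_sum, sum_mul]
      congr 1
      refine sum_congr rfl fun j _ ↦ ?_
      ring
    _ ≤ (1 + q) * E k * G := by
      rw [← sum_Ico_add_eq_sum_Icc hk, Nat.sub_self, varrho_zero, one_mul, mul_add]
      exact mul_le_mul_of_nonneg_right (by linarith) hG
    _ ≤ C * E k * G := by
      have := hE_nonneg k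
      gcongr

theorem one_le_two_mul_one_sub_mul_rpow (hβ : 0 < β) (hτ : 0 ≤ τ) {Λ : ℝ} (hΛ : 0 ≤ Λ)
    (hstep : τ ≤ (2 * Λ * (1 + β)) ^ (-(1 / β))) : 1 ≤ 2 * (1 - Λ * τ ^ β) := by
  have hbase : 0 ≤ 2 * Λ * (1 + β) := by positivity
  rw [Real.rpow_neg hbase, ← Real.inv_rpow hbase, one_div,
    Real.le_rpow_inv_iff_of_pos hτ (inv_nonneg.2 hbase) hβ] at hstep
  have hbound : 2 * Λ * (1 + β) * τ ^ β ≤ 1 :=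
    (mul_le_mul_of_nonneg_left hstep hbase).trans mul_inv_le_one
  have hτβ : 0 ≤ 2 * Λ * τ ^ β * β := by positivity
  linarith

variable {n : ℕ} {g v lam : ℕ → ℝ} {lambda C : ℝ}

theorem le_mul_mittagLeffler_of_discreteFracDeriv_le (hβ₀ : 0 < β) (hβ₁ : β ≤ 1) (hτ : 0 < τ)
    (hlam : ∀ l < n, 0 ≤ lam l) (hsum : ∑ l ∈ range n, lam l ≤ lambda)
    (hC : 0 ≤ C) (hstep : 1 ≤ C * (1 - lambda * τ ^ β))
    (hineq : ∀ k, 1 ≤ k → k ≤ n →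
      discreteFracDeriv β τ v k ≤ (∑ l ∈ Icc 1 k, lam (k - l) * v l) + g k)
    {k : ℕ} (hk : 1 ≤ k) (hkn : k ≤ n) {G : ℝ} (hG : 0 ≤ G)
    (hgG : ∀ m ∈ Icc 1 k, v 0 + ∑ j ∈ Icc 1 m, τ ^ β * varrho β (m - j) * g j ≤ G) :
    v k ≤ C * mittagLeffler β (C * lambda * (k * τ) ^ β) * G := by
  have hlambda : 0 ≤ lambda := (sum_nonneg fun l hl ↦ hlam l (mem_range.1 hl)).trans hsum
  have hq : 0 ≤ C * lambda * τ ^ β := by positivity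
  have hv_le (m : ℕ) (hm : m ∈ Icc 1 k) : v m ≤ G +
      ∑ j ∈ Icc 1 m, τ ^ β * varrho β (m - j) * ∑ l ∈ Icc 1 j, lam (j - l) * v l := by
    have hmk := (mem_Icc.1 hm).2
    have hinverted := le_add_sum_varrho_mul_of_discreteFracDeriv_le hβ₀.le hτ (k := m) fun j hj ↦
      hineq j (mem_Icc.1 hj).1 ((mem_Icc.1 hj).2.trans (hmk.trans hkn))
    simp only [mul_add, sum_add_distrib] at hinverted
    linarith [hgG m hm]
  rw [Real.mul_rpow k.cast_nonneg hτ.le, mul_comm ((k : ℝ) ^ β), ← mul_assoc]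
  refine le_supersolution_of_le_sum (K := fun i ↦ τ ^ β * varrho β i) (G := fun _ ↦ G)
    (w := fun j ↦ C * mittagLeffler β (C * lambda * τ ^ β * (j : ℝ) ^ β) * G)
    hkn (fun i ↦ ?_) ?_ hlam hsum ?_ ?_ hv_le (fun m hm ↦ ?_) k (right_mem_Icc.2 hk)
  · exact mul_nonneg (by positivity) (varrho_nonneg hβ₀.le i)
  · rw [varrho_zero, mul_one]
    exact sub_pos.1 (pos_of_mul_pos_right (one_pos.trans_le hstep) hC)
  · exact mul_nonneg (mul_nonneg hC (mittagLeffler_nonneg hβ₀ (by positivity))) hG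
  · exact ((monotone_mittagLeffler_mul_natCast_rpow hβ₀ hq).const_mul hC).mul_const hG
  · exact mittagLeffler_supersolution hβ₀ hβ₁ hτ.le hlambda hC hstep hG (mem_Icc.1 hm).1

theorem discrete_fractional_gronwall_linear_general (hβ₀ : 0 < β) (hβ₁ : β ≤ 1) (hτ : 0 < τ)
    (hg : 0 ≤ g 1) (hlam : ∀ l < n, 0 ≤ lam l) (hsum : ∑ l ∈ range n, lam l ≤ lambda)
    (hC : 0 ≤ C) (hstep : 1 ≤ C * (1 - lambda * τ ^ β)) (hv : 0 ≤ v 0)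
    (hineq : ∀ k, 1 ≤ k → k ≤ n →
      discreteFracDeriv β τ v k ≤ (∑ l ∈ Icc 1 k, lam (k - l) * v l) + g k)
    (k : ℕ) (hk : 1 ≤ k) (hkn : k ≤ n) :
    v k ≤ C * mittagLeffler β (C * lambda * (k * τ) ^ β) *
      (v 0 + (Icc 1 k).sup' (nonempty_Icc.mpr hk)
        (fun m ↦ ∑ j ∈ Icc 1 m, τ ^ β * varrho β (m - j) * g j)) := by
  set forcing : ℕ → ℝ := fun m ↦ ∑ j ∈ Icc 1 m, τ ^ β * varrho β (m - j) * g j with hforcing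
  have hforcing₁ : 0 ≤ forcing 1 := by
    simpa [hforcing, varrho_zero] using mul_nonneg (Real.rpow_nonneg hτ.le β) hg
  have hsup : 0 ≤ (Icc 1 k).sup' (nonempty_Icc.mpr hk) forcing :=
    hforcing₁.trans (le_sup' forcing (left_mem_Icc.2 hk))
  exact le_mul_mittagLeffler_of_discreteFracDeriv_le hβ₀ hβ₁ hτ hlam hsum hC hstep hineq hk hkn
    (add_nonneg hv hsup) fun m hm ↦ add_le_add_right (le_sup' forcing hm) _

end Gronwall

/-- Discrete fractional Grönwall inequality, first-power version. -/
theorem discrete_fractional_gronwall_linear (β τ : ℝ) (hβ0 : 0 < β) (hβ1 : β < 1)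
    (hτ : 0 < τ)
    (nT : ℕ) (hnT : 1 ≤ nT)
    (g v lam : ℕ → ℝ) (lambda : ℝ)
    (hg : ∀ k, 1 ≤ k → k ≤ nT → 0 ≤ g k) (hlam : ∀ l < nT, 0 ≤ lam l)
    (hlambda : 0 ≤ lambda)
    (hsum : ∑ l ∈ Finset.range nT, lam l ≤ lambda)
    (hstep : τ ≤ (2 * lambda * (1 + β)) ^ (-(1 / β)))
    (hv : ∀ k ≤ nT, 0 ≤ v k)
    (hineq : ∀ k : ℕ, 1 ≤ k → k ≤ nT →
      τ ^ (-β) * ∑ j ∈ Finset.range (k + 1), varpi β (k - j) * (v j - v 0)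
        ≤ (∑ l ∈ Finset.Icc 1 k, lam (k - l) * v l) + g k) :
    ∀ k : ℕ, ∀ hk : 1 ≤ k, k ≤ nT →
      v k ≤ 2 * mittagLeffler β (2 * lambda * ((k : ℝ) * τ) ^ β) *
        (v 0 + (Finset.Icc 1 k).sup' (Finset.nonempty_Icc.mpr hk)
          (fun m => ∑ j ∈ Finset.Icc 1 m, τ ^ β * varrho β (m - j) * g j)) :=
  discrete_fractional_gronwall_linear_general hβ0 hβ1.le hτ (hg 1 le_rfl hnT) hlam hsum
    zero_le_two (one_le_two_mul_one_sub_mul_rpow hβ0 hτ.le hlambda hstep) (hv 0 nT.zero_le) hineq
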